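/- Let (λ_k)_{k≥1} be a strictly increasing sequence of positive real numbers with ∑_{k≥1} 1/λ_k < ∞, and let T > 0. Then for every n ∈ ℕ⁺, the function t ↦ e^{−λ_n t} on (0,T) does not belong to the closure in L²(0,T) of the linear span of the functions {t ↦ e^{−λ_k t} : k ∈ ℕ⁺, k ≠ n}. -/

import Mathlib

open MeasureTheory Real Set

/-- A combination of three equally spaced translates. -/
noncomputable def trip (α β γ a : ℝ) (p : ℝ → ℝ) : ℝ → ℝ :=
  fun t => α * p (t + 2 * a) + β * p (t + a) + γ * p t

lemma int_add_fun {f g : ℝ → ℝ} (hf : Integrable f) (hg : Integrable g) :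
    Integrable (fun t => f t + g t) := hf.add hg

lemma trip_sq (f : ℝ → ℝ) (hf : MemLp f 2 volume) (a : ℝ) :
    ∃ R Q : ℝ, ∀ α β γ : ℝ, Integrable (fun t => (trip α β γ a f t) ^ 2) ∧
      ∫ t, (trip α β γ a f t) ^ 2 =
        (α ^ 2 + β ^ 2 + γ ^ 2) * (∫ t, f t ^ 2) + 2 * (α * β + β * γ) * R + 2 * α * γ * Q := by
  have hs : ∀ b : ℝ, MemLp (fun t => f (t + b)) 2 volume := fun b =>
    hf.comp_measurePreserving (measurePreserving_add_right volume b)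
  have hx := hs (2 * a)
  have hy := hs a
  refine ⟨∫ t, f (t + a) * f t, ∫ t, f (t + 2 * a) * f t, fun α β γ => ?_⟩
  have ixx : Integrable (fun t => f (t + 2 * a) * f (t + 2 * a)) := hx.integrable_mul hx
  have iyy : Integrable (fun t => f (t + a) * f (t + a)) := hy.integrable_mul hy
  have izz : Integrable (fun t => f t * f t) := hf.integrable_mul hf
  have ixy : Integrable (fun t => f (t + 2 * a) * f (t + a)) := hx.integrable_mul hy
  have iyz : Integrable (fun t => f (t + a) * f t) := hy.integrable_mul hf
  have ixz : Integrable (fun t => f (t + 2 * a) * f t) := hx.integrable_mul hf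
  have e : (fun t => (trip α β γ a f t) ^ 2) = fun t =>
      α ^ 2 * (f (t + 2 * a) * f (t + 2 * a)) + β ^ 2 * (f (t + a) * f (t + a))
      + γ ^ 2 * (f t * f t) + 2 * α * β * (f (t + 2 * a) * f (t + a))
      + 2 * β * γ * (f (t + a) * f t) + 2 * α * γ * (f (t + 2 * a) * f t) := by
    funext t; simp only [trip]; ring
  have j1 := ixx.const_mul (α ^ 2)
  have j2 := iyy.const_mul (β ^ 2)
  have j3 := izz.const_mul (γ ^ 2)
  have j4 := ixy.const_mul (2 * α * β)
  have j5 := iyz.const_mul (2 * β * γ)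
  have j6 := ixz.const_mul (2 * α * γ)
  rw [e]
  refine ⟨((((j1.add j2).add j3).add j4).add j5).add j6, ?_⟩
  have a2 := int_add_fun j1 j2
  have a3 := int_add_fun a2 j3
  have a4 := int_add_fun a3 j4
  have a5 := int_add_fun a4 j5
  rw [integral_add a5 j6, integral_add a4 j5, integral_add a3 j4, integral_add a2 j3,
    integral_add j1 j2]
  simp only [integral_const_mul]
  have t1 : ∫ t, f (t + 2 * a) * f (t + 2 * a) = ∫ t, f t ^ 2 := by
    rw [integral_add_right_eq_self (fun t => f t * f t) (2 * a)]; simp only [sq]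
  have t2 : ∫ t, f (t + a) * f (t + a) = ∫ t, f t ^ 2 := by
    rw [integral_add_right_eq_self (fun t => f t * f t) a]; simp only [sq]
  have t3 : ∫ t, f t * f t = ∫ t, f t ^ 2 := by simp only [sq]
  have t4 : ∫ t, f (t + 2 * a) * f (t + a) = ∫ t, f (t + a) * f t := by
    rw [← integral_add_right_eq_self (fun t => f (t + a) * f t) a]
    congr 1; funext t; ring_nf
  rw [t1, t2, t3, t4]; ring

/-- The triple is a contraction. -/
def Contr (α β γ : ℝ) : Prop := ∀ (a : ℝ) (f : ℝ → ℝ), MemLp f 2 volume →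
  Integrable (fun t => (trip α β γ a f t) ^ 2) ∧
  ∫ t, (trip α β γ a f t) ^ 2 ≤ ∫ t, f t ^ 2

lemma contr_good : Contr (5/9) (1/2) (-1/18) := by
  intro a f hf
  obtain ⟨R, Q, h⟩ := trip_sq f hf a
  refine ⟨(h _ _ _).1, ?_⟩
  have h1 : 0 ≤ ∫ t, (trip 1 (-2) 1 a f t) ^ 2 := integral_nonneg fun t => sq_nonneg _
  have h2 : 0 ≤ ∫ t, (trip 1 (-1) 0 a f t) ^ 2 := integral_nonneg fun t => sq_nonneg _
  rw [(h _ _ _).2] at h1 h2 ⊢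
  linarith

lemma contr_bad (w : ℝ) (h0 : 0 ≤ w) (hw : w ≤ 1) : Contr (1/2) 0 (-w/2) := by
  intro a f hf
  obtain ⟨R, Q, h⟩ := trip_sq f hf a
  refine ⟨(h _ _ _).1, ?_⟩
  have h1 : 0 ≤ ∫ t, (trip 1 0 1 a f t) ^ 2 := integral_nonneg fun t => sq_nonneg _
  have h2 : 0 ≤ ∫ t, f t ^ 2 := integral_nonneg fun t => sq_nonneg _
  rw [(h _ _ _).2] at h1 ⊢
  nlinarith [mul_nonneg h0 h1, mul_nonneg h2 (sub_nonneg.2 hw),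
    mul_nonneg (mul_nonneg h2 (sub_nonneg.2 hw)) h0]

lemma contr_interval {α β γ : ℝ} (h : Contr α β γ) (a L : ℝ) (ha : 0 ≤ a) (hL : 2 * a ≤ L)
    (p : ℝ → ℝ) (hp : Continuous p) :
    ∫ t in (0:ℝ)..(L - 2 * a), (trip α β γ a p t) ^ 2 ≤ ∫ t in (0:ℝ)..L, p t ^ 2 := by
  set f := (Ioc 0 L).indicator p with hfdef
  have hf : MemLp f 2 volume := by
    rw [hfdef, memLp_indicator_iff_restrict measurableSet_Ioc]
    obtain ⟨C, hC⟩ := (isCompact_Icc (a := 0) (b := L)).exists_bound_of_continuousOn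
      hp.continuousOn
    refine MemLp.of_bound hp.aestronglyMeasurable C ?_
    filter_upwards [ae_restrict_mem measurableSet_Ioc] with t ht
    exact hC t (Ioc_subset_Icc_self ht)
  obtain ⟨hi, hle⟩ := h a f hf
  rw [intervalIntegral.integral_of_le (by linarith), intervalIntegral.integral_of_le (by linarith)]
  have e1 : ∫ t in Ioc 0 L, p t ^ 2 = ∫ t, f t ^ 2 := by
    rw [← integral_indicator measurableSet_Ioc]
    congr 1; funext t
    by_cases ht : t ∈ Ioc 0 L <;> simp [hfdef, ht]
  have e2 : ∫ t in Ioc 0 (L - 2 * a), (trip α β γ a p t) ^ 2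
      = ∫ t in Ioc 0 (L - 2 * a), (trip α β γ a f t) ^ 2 := by
    refine setIntegral_congr_fun measurableSet_Ioc fun t ht => ?_
    have m0 : t ∈ Ioc 0 L := ⟨ht.1, by linarith [ht.2]⟩
    have m1 : t + a ∈ Ioc 0 L := ⟨by linarith [ht.1], by linarith [ht.2]⟩
    have m2 : t + 2 * a ∈ Ioc 0 L := ⟨by linarith [ht.1], by linarith [ht.2]⟩
    simp only [trip, hfdef, indicator_of_mem m0, indicator_of_mem m1, indicator_of_mem m2]
  rw [e1, e2]
  exact (setIntegral_le_integral hi (Filter.Eventually.of_forall fun t => sq_nonneg _)).trans hle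

/-- symbol of the triple -/
noncomputable def sym3 (α β γ a μ : ℝ) : ℝ :=
  α * exp (-μ * a) ^ 2 + β * exp (-μ * a) + γ

lemma trip_exp (α β γ a μ t : ℝ) :
    trip α β γ a (fun t => exp (-μ * t)) t = sym3 α β γ a μ * exp (-μ * t) := by
  simp only [trip, sym3]
  have h1 : exp (-μ * (t + a)) = exp (-μ * a) * exp (-μ * t) := by
    rw [← Real.exp_add]; ring_nf
  have h2 : exp (-μ * (t + 2 * a)) = exp (-μ * a) ^ 2 * exp (-μ * t) := by
    rw [sq, ← Real.exp_add, ← Real.exp_add]; ring_nf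
  rw [h1, h2]; ring

lemma trip_sum (α β γ a : ℝ) (lam : ℕ+ → ℝ) (n : ℕ+) (c0 : ℝ) (J : Finset ℕ+) (c : ℕ+ → ℝ)
    (t : ℝ) :
    trip α β γ a (fun t => c0 * exp (-lam n * t) + ∑ j ∈ J, c j * exp (-lam j * t)) t =
    (sym3 α β γ a (lam n) * c0) * exp (-lam n * t) +
      ∑ j ∈ J, (sym3 α β γ a (lam j) * c j) * exp (-lam j * t) := by
  have h : ∀ μ, _ := fun μ => trip_exp α β γ a μ t
  simp only [trip] at h ⊢
  have : ∀ j, (sym3 α β γ a (lam j) * c j) * exp (-lam j * t) =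
    α * (c j * exp (-lam j * (t + 2 * a))) + β * (c j * exp (-lam j * (t + a)))
      + γ * (c j * exp (-lam j * t)) := by
    intro j
    linear_combination (-c j) * h (lam j)
  simp only [this, Finset.sum_add_distrib, ← Finset.mul_sum]
  linear_combination c0 * h (lam n)

lemma main_induct (lam α β γ a : ℕ+ → ℝ) (n : ℕ+)
    (ha : ∀ k, 0 ≤ a k) (hc : ∀ k, Contr (α k) (β k) (γ k))
    (hz : ∀ k, k ≠ n → sym3 (α k) (β k) (γ k) (a k) (lam k) = 0) (J : Finset ℕ+) :
    n ∉ J → ∀ (c0 : ℝ) (c : ℕ+ → ℝ) (L : ℝ), ∑ k ∈ J, 2 * a k ≤ L →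
    ∫ t in (0:ℝ)..(L - ∑ k ∈ J, 2 * a k),
      ((∏ k ∈ J, sym3 (α k) (β k) (γ k) (a k) (lam n)) * c0 * exp (-lam n * t)) ^ 2 ≤
    ∫ t in (0:ℝ)..L, (c0 * exp (-lam n * t) + ∑ j ∈ J, c j * exp (-lam j * t)) ^ 2 := by
  induction J using Finset.induction_on with
  | empty => intro _ c0 c L hL; simp
  | insert k J hk ih =>
    intro hn c0 c L hL
    rw [Finset.mem_insert, not_or] at hn
    rw [Finset.sum_insert hk] at hL
    have hs : 0 ≤ ∑ k ∈ J, 2 * a k := Finset.sum_nonneg fun i _ => by linarith [ha i]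
    have h1 := contr_interval (hc k) (a k) L (ha k) (by linarith)
      (fun t => c0 * exp (-lam n * t) + ∑ j ∈ insert k J, c j * exp (-lam j * t)) (by fun_prop)
    refine le_trans ?_ h1
    simp only [trip_sum]
    have h2 := ih hn.2 (sym3 (α k) (β k) (γ k) (a k) (lam n) * c0)
      (fun j => sym3 (α k) (β k) (γ k) (a k) (lam j) * c j) (L - 2 * a k) (by linarith)
    simp only [Finset.sum_insert hk, Finset.prod_insert hk, hz k (Ne.symm hn.1), zero_mul, zero_add]
    have e1 : L - 2 * a k - ∑ k ∈ J, 2 * a k = L - (2 * a k + ∑ k ∈ J, 2 * a k) := by ring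
    rw [e1] at h2
    refine le_trans (le_of_eq ?_) h2
    congr 1; funext t; ring

lemma sym_good_zero {μ : ℝ} (hμ : 0 < μ) : sym3 (5/9) (1/2) (-1/18) (log 10 / μ) μ = 0 := by
  have : exp (-μ * (log 10 / μ)) = 1 / 10 := by
    rw [show -μ * (log 10 / μ) = - log 10 by field_simp, Real.exp_neg, Real.exp_log (by norm_num)]
    norm_num
  rw [sym3, this]; norm_num

lemma sym_good_lower (a μ : ℝ) (h1 : 0 ≤ μ * a) : 1 - 2 * (μ * a) ≤ sym3 (5/9) (1/2) (-1/18) a μ := by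
  have h : 1 - μ * a ≤ exp (-μ * a) := by
    have := Real.add_one_le_exp (-μ * a); linarith
  have h0 := Real.exp_pos (-μ * a)
  rw [sym3]
  nlinarith [sq_nonneg (exp (-μ * a) - 1)]

lemma one_sub_sum_le (s : Finset ℕ+) (x : ℕ+ → ℝ) :
    (∀ k ∈ s, 0 ≤ x k) → (∀ k ∈ s, x k ≤ 1) →
    1 - ∑ k ∈ s, x k ≤ ∏ k ∈ s, (1 - x k) ∧ ∏ k ∈ s, (1 - x k) ≤ 1 := by
  induction s using Finset.induction_on with
  | empty => simp
  | insert k s hk ih =>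
    intro h0 h1
    obtain ⟨h2, h3⟩ := ih (fun j hj => h0 j (Finset.mem_insert_of_mem hj))
      (fun j hj => h1 j (Finset.mem_insert_of_mem hj))
    have h4 := h0 k (Finset.mem_insert_self _ _)
    have h5 := h1 k (Finset.mem_insert_self _ _)
    rw [Finset.sum_insert hk, Finset.prod_insert hk]
    constructor <;> nlinarith

lemma lower_bound (lam : ℕ+ → ℝ) (hinj : Function.Injective lam)
    (hpos : ∀ k : ℕ+, 0 < lam k) (hsum : Summable fun k : ℕ+ => 1 / lam k)
    (T : ℝ) (hT : 0 < T) (n : ℕ+) :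
    ∃ δ > 0, ∀ (J : Finset ℕ+), n ∉ J → ∀ c : ℕ+ → ℝ,
      δ ≤ ∫ t in (0:ℝ)..T, (exp (-lam n * t) + ∑ j ∈ J, c j * exp (-lam j * t)) ^ 2 := by
  classical
  have hlog : 0 < log 10 := Real.log_pos (by norm_num)
  obtain ⟨A, hA⟩ : ∃ A : Finset ℕ+, ∀ B : Finset ℕ+, Disjoint B A →
      ∑ k ∈ B, 2 * (log 10 / lam k) ≤ T / 4 ∧
      ∑ k ∈ B, 2 * (lam n * (log 10 / lam k)) ≤ 1 / 2 := by
    have hε : 0 < min (T / 4 / (2 * log 10)) (1 / 2 / (2 * (lam n * log 10))) := by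
      have := hpos n
      positivity
    obtain ⟨A, hA⟩ := (summable_iff_vanishing_norm.1 hsum) _ hε
    refine ⟨A, fun B hB => ?_⟩
    have h := hA B hB
    rw [lt_min_iff] at h
    have hn := hpos n
    have h1 := (le_abs_self _).trans h.1.le
    have h2 := (le_abs_self _).trans h.2.le
    rw [le_div_iff₀ (by positivity)] at h1 h2
    constructor
    · refine le_trans (le_of_eq ?_) h1
      rw [Finset.sum_mul]; exact Finset.sum_congr rfl fun k _ => by ring
    · refine le_trans (le_of_eq ?_) h2
      rw [Finset.sum_mul]; exact Finset.sum_congr rfl fun k _ => by ring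
  set b : ℝ := T / (8 * (A.card + 1)) with hb
  have hbpos : 0 < b := by positivity
  let α : ℕ+ → ℝ := fun k => if k ∈ A then 1/2 else 5/9
  let β : ℕ+ → ℝ := fun k => if k ∈ A then 0 else 1/2
  let γ : ℕ+ → ℝ := fun k => if k ∈ A then -(exp (-lam k * b) ^ 2)/2 else -1/18
  let a : ℕ+ → ℝ := fun k => if k ∈ A then b else log 10 / lam k
  have ha : ∀ k, 0 ≤ a k := by
    intro k; simp only [a]; split_ifs
    · exact hbpos.le
    · have := hpos k; positivity
  have hc : ∀ k, Contr (α k) (β k) (γ k) := by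
    intro k; simp only [α, β, γ]; split_ifs
    · refine contr_bad _ (by positivity) (pow_le_one₀ (by positivity) ?_)
      rw [Real.exp_le_one_iff]; nlinarith [hpos k]
    · exact contr_good
  have hz : ∀ k, k ≠ n → sym3 (α k) (β k) (γ k) (a k) (lam k) = 0 := by
    intro k _; simp only [α, β, γ, a]; split_ifs
    · simp only [sym3]; ring
    · exact sym_good_zero (hpos k)
  set h : ℕ+ → ℝ := fun k => sym3 (α k) (β k) (γ k) (a k) (lam n) with hh
  have hbad : ∀ k ∈ A, k ≠ n → h k ≠ 0 := by
    intro k hk hkn h0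
    simp only [hh, α, β, γ, a, if_pos hk, sym3] at h0
    have h1 : exp (-lam n * b) ^ 2 = exp (-lam k * b) ^ 2 := by linarith
    have h2 := (pow_left_inj₀ (by positivity) (by positivity) two_ne_zero).1 h1
    have h3 := Real.exp_injective h2
    have h4 := mul_right_cancel₀ hbpos.ne' h3
    exact hkn (hinj (by linarith))
  set P := ∏ k ∈ A.erase n, h k with hP
  have hP0 : P ≠ 0 := Finset.prod_ne_zero_iff.2 fun k hk =>
    hbad k (Finset.mem_of_mem_erase hk) (Finset.ne_of_mem_erase hk)
  refine ⟨(P * (1/2) * exp (-lam n * T)) ^ 2 * (T / 2), by positivity, fun J hJ c => ?_⟩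
  set B := J \ A with hB
  have hBA : Disjoint B A := Finset.sdiff_disjoint
  have hdis : Disjoint (A.erase n) B :=
    (hBA.mono_right (Finset.erase_subset _ _)).symm
  set K := A.erase n ∪ B with hK
  have hnK : n ∉ K := by simp [hK, hB, hJ]
  have hJK : J ⊆ K := by
    intro k hk
    have : k ≠ n := fun e => hJ (e ▸ hk)
    by_cases hkA : k ∈ A <;> simp [hK, hB, hk, hkA, this]
  have hprod : ∏ k ∈ K, h k = P * ∏ k ∈ B, h k := Finset.prod_union hdis
  have hhB : ∀ k ∈ B, 1 - 2 * (lam n * (log 10 / lam k)) ≤ h k := by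
    intro k hk
    have hkA : k ∉ A := (Finset.mem_sdiff.1 hk).2
    simp only [hh, α, β, γ, a, if_neg hkA]
    exact sym_good_lower _ _ (by have := hpos k; have := hpos n; positivity)
  have hterm : ∀ k, 0 ≤ 2 * (lam n * (log 10 / lam k)) := by
    intro k; have := hpos k; have := hpos n; positivity
  have hBprod : 1/2 ≤ ∏ k ∈ B, h k := by
    have hs := (hA B hBA).2
    have hle1 : ∀ k ∈ B, 2 * (lam n * (log 10 / lam k)) ≤ 1 := fun k hk => by
      have := Finset.single_le_sum (f := fun k => 2 * (lam n * (log 10 / lam k)))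
        (fun i _ => hterm i) hk
      linarith
    have h1 : 1 - ∑ k ∈ B, 2 * (lam n * (log 10 / lam k)) ≤
        ∏ k ∈ B, (1 - 2 * (lam n * (log 10 / lam k))) :=
      (one_sub_sum_le B _ (fun k _ => hterm k) hle1).1
    have h2 : ∏ k ∈ B, (1 - 2 * (lam n * (log 10 / lam k))) ≤ ∏ k ∈ B, h k :=
      Finset.prod_le_prod (fun k hk => by linarith [hle1 k hk]) hhB
    linarith
  have hlen : ∑ k ∈ K, 2 * a k ≤ T / 2 := by
    rw [hK, Finset.sum_union hdis]
    have h1 : ∑ k ∈ A.erase n, 2 * a k ≤ T / 4 := by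
      have : ∑ k ∈ A.erase n, 2 * a k ≤ ∑ k ∈ A, 2 * a k :=
        Finset.sum_le_sum_of_subset_of_nonneg (Finset.erase_subset _ _)
          fun i _ _ => by linarith [ha i]
      refine this.trans ?_
      rw [Finset.sum_congr rfl (g := fun _ => 2 * b) fun k hk => by simp only [a, if_pos hk]]
      rw [Finset.sum_const, nsmul_eq_mul]
      have e : b * (8 * (A.card + 1)) = T := by rw [hb]; field_simp
      nlinarith
    have h2 : ∑ k ∈ B, 2 * a k ≤ T / 4 := by
      rw [Finset.sum_congr rfl (g := fun k => 2 * (log 10 / lam k)) fun k hk => by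
        simp only [a, if_neg (Finset.mem_sdiff.1 hk).2]]
      exact (hA B hBA).1
    linarith
  have key := main_induct lam α β γ a n ha hc hz K hnK 1 (fun k => if k ∈ J then c k else 0) T
    (by linarith)
  have esum : ∀ t, ∑ j ∈ K, (if j ∈ J then c j else 0) * exp (-lam j * t) =
      ∑ j ∈ J, c j * exp (-lam j * t) := by
    intro t
    symm
    rw [← Finset.sum_subset hJK (f := fun j => (if j ∈ J then c j else 0) * exp (-lam j * t))]
    · exact Finset.sum_congr rfl fun k hk => by simp [hk]
    · intro k _ hk; simp [hk]
  simp only [esum, one_mul, mul_one] at key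
  refine le_trans ?_ key
  have hsn : 0 ≤ ∑ k ∈ K, 2 * a k := Finset.sum_nonneg fun i _ => by linarith [ha i]
  set M := T - ∑ k ∈ K, 2 * a k with hM
  have hMT : T / 2 ≤ M := by linarith
  have hconst : ∫ t in (0:ℝ)..M, (P * (1/2) * exp (-lam n * T)) ^ 2 =
      M * (P * (1/2) * exp (-lam n * T)) ^ 2 := by simp
  calc (P * (1/2) * exp (-lam n * T)) ^ 2 * (T / 2)
      ≤ M * (P * (1/2) * exp (-lam n * T)) ^ 2 := by
        rw [mul_comm]; exact mul_le_mul_of_nonneg_right hMT (sq_nonneg _)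
    _ = ∫ t in (0:ℝ)..M, (P * (1/2) * exp (-lam n * T)) ^ 2 := hconst.symm
    _ ≤ _ := by
        refine intervalIntegral.integral_mono_on (by linarith)
          (Continuous.intervalIntegrable (by fun_prop) _ _)
          (Continuous.intervalIntegrable (by fun_prop) _ _) fun t ht => ?_
        change _ ≤ ((∏ k ∈ K, h k) * exp (-lam n * t)) ^ 2
        rw [hprod, sq_le_sq]
        simp only [abs_mul, Real.abs_exp]
        have he : exp (-lam n * T) ≤ exp (-lam n * t) := by
          rw [Real.exp_le_exp]; nlinarith [hpos n, ht.2]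
        have : |(1/2:ℝ)| ≤ |∏ k ∈ B, h k| := by
          rw [abs_of_pos (by norm_num : (0:ℝ) < 1/2)]
          exact hBprod.trans (le_abs_self _)
        gcongr

/-- Müntz-type non-density (Schwartz): if `(λ_k)` is strictly increasing,
positive, with `∑ 1/λ_k < ∞`, then in `L²(0,T)` the exponential `e^{-λ_n t}`
does not lie in the closure of the span of the remaining exponentials. -/
theorem stmt3 (lam : ℕ+ → ℝ) (hmono : StrictMono lam)
    (hpos : ∀ k : ℕ+, 0 < lam k)
    (hsum : Summable fun k : ℕ+ => 1 / lam k)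
    (T : ℝ) (hT : 0 < T)
    (F : ℕ+ → Lp ℝ 2 (volume.restrict (Ioo (0 : ℝ) T)))
    (hF : ∀ k : ℕ+,
      (F k : ℝ → ℝ) =ᵐ[volume.restrict (Ioo (0 : ℝ) T)]
        fun t => Real.exp (-lam k * t)) :
    ∀ n : ℕ+,
      F n ∉ closure
        ((Submodule.span ℝ {g | ∃ k : ℕ+, k ≠ n ∧ g = F k} :
          Submodule ℝ (Lp ℝ 2 (volume.restrict (Ioo (0 : ℝ) T)))) :
          Set (Lp ℝ 2 (volume.restrict (Ioo (0 : ℝ) T)))) := by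
  intro n hcl
  obtain ⟨δ, hδ, hlow⟩ := lower_bound lam hmono.injective hpos hsum T hT n
  obtain ⟨g, hg, hd⟩ := Metric.mem_closure_iff.1 hcl (√δ) (Real.sqrt_pos.2 hδ)
  have hset : {g | ∃ k : ℕ+, k ≠ n ∧ g = F k} = F '' {k | k ≠ n} := by
    ext g; simp [eq_comm]
  rw [SetLike.mem_coe, hset, Finsupp.mem_span_image_iff_linearCombination] at hg
  obtain ⟨l, hl, rfl⟩ := hg
  have hnl : n ∉ l.support := fun hn => (Finsupp.mem_supported ℝ l).1 hl hn rfl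
  have hae : ∀ s : Finset ℕ+, ((∑ j ∈ s, l j • F j :
      Lp ℝ 2 (volume.restrict (Ioo (0 : ℝ) T))) : ℝ → ℝ)
      =ᵐ[volume.restrict (Ioo (0 : ℝ) T)] fun t => ∑ j ∈ s, l j * exp (-lam j * t) := by
    intro s
    induction s using Finset.induction_on with
    | empty => simp only [Finset.sum_empty]; exact Lp.coeFn_zero _ _ _
    | insert k s hk ih =>
      simp only [Finset.sum_insert hk]
      filter_upwards [Lp.coeFn_add (l k • F k) (∑ j ∈ s, l j • F j), ih,
        Lp.coeFn_smul (l k) (F k), hF k] with t h1 h2 h3 h4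
      rw [h1, Pi.add_apply, h2, h3, Pi.smul_apply, h4, smul_eq_mul]
  have hL : Finsupp.linearCombination ℝ F l = ∑ j ∈ l.support, l j • F j := rfl
  rw [hL, dist_eq_norm] at hd
  have hlt : ‖F n - ∑ j ∈ l.support, l j • F j‖ ^ 2 < δ := by
    rw [← Real.sq_sqrt hδ.le]
    exact pow_lt_pow_left₀ hd (norm_nonneg _) two_ne_zero
  have hn := hlow l.support hnl (fun j => - l j)
  rw [← real_inner_self_eq_norm_sq, L2.inner_def] at hlt
  rw [intervalIntegral.integral_of_le hT.le, integral_Ioc_eq_integral_Ioo] at hn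
  refine absurd hlt (not_lt.2 (hn.trans (le_of_eq (integral_congr_ae ?_))))
  filter_upwards [Lp.coeFn_sub (F n) (∑ j ∈ l.support, l j • F j), hF n, hae l.support]
    with t h1 h2 h3
  rw [real_inner_self_eq_norm_sq, h1, Pi.sub_apply, h2, h3, Real.norm_eq_abs, sq_abs]
  simp only [neg_mul, Finset.sum_neg_distrib]
  ring
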